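/- In any nondegenerate triangle, the distance from the incenter X1 to the circumcenter X3 satisfies dist(X1, X3) ≥ (1 + √3)·dist(X1, X6), where X6 is the symmedian point. -/

import Mathlib

/-!
Write the side lengths as `y + z`, `z + x`, `x + y` with `x, y, z > 0` (Ravi's substitution) and put
`s = x + y + z`, `N = x² + y² + z² + xy + yz + zx`. Up to the common factor
`(y + z)(z + x)(x + y) / s`, the squared distances from the incenter to the circumcenter and to the
symmedian point are `∑ x(y - z)² / (16xyz)` and `∑ xy(x - y)² / (4N²)`. With `s` and `xy + yz + zx`
held fixed, `N` is constant, and the inequality between them becomes hardest when `xyz` is largest,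
that is, for an isosceles triangle with parameters `(u, v, v)`, `v ≤ u`. There it reduces to
`(u - √3 v)² ≥ 0`, which is where the constant `1 + √3` comes from.
-/

/-- The point with normalized barycentric coordinates `(x : y : z)`
with respect to the triangle `A B C`. -/
noncomputable def bary (A B C : EuclideanSpace ℝ (Fin 2)) (x y z : ℝ) :
    EuclideanSpace ℝ (Fin 2) :=
  (x + y + z)⁻¹ • (x • A + y • B + z • C)

/-- The triangle center with barycentric coordinates
`(f a b c : f b c a : f c a b)` where `a, b, c` are the side lengths. -/
noncomputable def tcenter (f : ℝ → ℝ → ℝ → ℝ) (A B C : EuclideanSpace ℝ (Fin 2)) :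
    EuclideanSpace ℝ (Fin 2) :=
  bary A B C (f (dist B C) (dist C A) (dist A B))
    (f (dist C A) (dist A B) (dist B C))
    (f (dist A B) (dist B C) (dist C A))

/-- The incenter `X1`. -/
noncomputable def incenter (A B C : EuclideanSpace ℝ (Fin 2)) : EuclideanSpace ℝ (Fin 2) :=
  tcenter (fun a _ _ => a) A B C

/-- The circumcenter `X3`. Its barycentric weights add up to `0` when `A`, `B`, `C` are collinear,
so the definition is meaningful for nondegenerate triangles only. -/
noncomputable def circumcenter (A B C : EuclideanSpace ℝ (Fin 2)) : EuclideanSpace ℝ (Fin 2) :=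
  tcenter (fun a b c => a ^ 2 * (a ^ 2 - b ^ 2 - c ^ 2)) A B C

/-- The symmedian point `X6`. -/
noncomputable def symmedianPoint (A B C : EuclideanSpace ℝ (Fin 2)) : EuclideanSpace ℝ (Fin 2) :=
  tcenter (fun a _ _ => a ^ 2) A B C

section Isosceles

variable {R : Type*} [CommRing R] {x y z u v : R}

theorem sum_mul_mul_sub_sq_eq_isosceles (hsum : x + y + z = u + 2 * v)
    (hpair : x * y + y * z + z * x = 2 * u * v + v ^ 2) :
    x * y * (x - y) ^ 2 + y * z * (y - z) ^ 2 + z * x * (z - x) ^ 2 =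
      2 * u * v * (u - v) ^ 2 - 3 * (u + 2 * v) * (u * v ^ 2 - x * y * z) := by
  calc _ = (x * y + y * z + z * x) * ((x + y + z) ^ 2 - 4 * (x * y + y * z + z * x)) +
        3 * (x + y + z) * (x * y * z) := by ring
    _ = _ := by rw [hsum, hpair]; ring

theorem sum_mul_sub_sq_eq_isosceles (hsum : x + y + z = u + 2 * v)
    (hpair : x * y + y * z + z * x = 2 * u * v + v ^ 2) :
    x * (y - z) ^ 2 + y * (z - x) ^ 2 + z * (x - y) ^ 2 =
      2 * v * (u - v) ^ 2 + 9 * (u * v ^ 2 - x * y * z) := by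
  calc _ = (x + y + z) * (x * y + y * z + z * x) - 9 * (x * y * z) := by ring
    _ = _ := by rw [hsum, hpair]; ring

variable [LinearOrder R] [IsStrictOrderedRing R]

theorem le_apex_of_isosceles_sum_eq (hvu : v ≤ u) (hsum : x + y + z = u + 2 * v)
    (hpair : x * y + y * z + z * x = 2 * u * v + v ^ 2) : x ≤ u := by
  have hdiscr : (y - z) ^ 2 = (u - x) * (u + 3 * x - 4 * v) := by
    linear_combination (3 * x + y + z + u + 2 * v) * hsum - 4 * hpair
  by_contra! hux
  have hneg : (u - x) * (u + 3 * x - 4 * v) < 0 :=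
    mul_neg_of_neg_of_pos (by linarith) (by linarith)
  linarith [sq_nonneg (y - z)]

theorem mul_mul_le_isosceles (hvu : v ≤ u) (hsum : x + y + z = u + 2 * v)
    (hpair : x * y + y * z + z * x = 2 * u * v + v ^ 2) : x * y * z ≤ u * v ^ 2 := by
  have hx : x ≤ u := le_apex_of_isosceles_sum_eq hvu hsum hpair
  have hy : y ≤ u := le_apex_of_isosceles_sum_eq (y := z) (z := x) hvu
    (by linarith) (by linarith)
  have hz : z ≤ u := le_apex_of_isosceles_sum_eq (y := x) (z := y) hvu
    (by linarith) (by linarith)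
  -- `(t - x)(t - y)(t - z)` and `(t - u)(t - v)²` differ by a constant: evaluate both at `t = u`.
  have hprod : 0 ≤ (u - x) * (u - y) * (u - z) :=
    mul_nonneg (mul_nonneg (sub_nonneg.2 hx) (sub_nonneg.2 hy)) (sub_nonneg.2 hz)
  have hexpand : (u - x) * (u - y) * (u - z) = u * v ^ 2 - x * y * z := by
    linear_combination u * hpair - u ^ 2 * hsum
  linarith

end Isosceles

theorem exists_isosceles_sum_eq_sum_mul_eq {x y z : ℝ} (hsum : 0 ≤ x + y + z)
    (hpair : 0 ≤ x * y + y * z + z * x) :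
    ∃ u v : ℝ, 0 ≤ v ∧ v ≤ u ∧ x + y + z = u + 2 * v ∧
      x * y + y * z + z * x = 2 * u * v + v ^ 2 := by
  set D := (x + y + z) ^ 2 - 3 * (x * y + y * z + z * x) with hD
  have hD_nonneg : 0 ≤ D := by
    linarith [sq_nonneg (x - y), sq_nonneg (y - z), sq_nonneg (z - x)]
  have hsqrt_le : √D ≤ x + y + z := Real.sqrt_le_iff.2 ⟨hsum, by linarith⟩
  refine ⟨(x + y + z + 2 * √D) / 3, (x + y + z - √D) / 3, by linarith,
    by linarith [Real.sqrt_nonneg D], by ring, ?_⟩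
  linear_combination (1 / 3) * (Real.sq_sqrt hD_nonneg + hD)

theorem two_mul_one_add_sqrt_three_mul_le (u v : ℝ) :
    2 * (1 + √3) * (u * v) ≤ u ^ 2 + 2 * u * v + 3 * v ^ 2 := by
  have hsq : (√3 : ℝ) ^ 2 = 3 := Real.sq_sqrt (by norm_num)
  linear_combination sq_nonneg (u - √3 * v) + v ^ 2 * hsq

theorem ravi_inequality {x y z : ℝ} (hx : 0 ≤ x) (hy : 0 ≤ y) (hz : 0 ≤ z) :
    4 * (1 + √3) ^ 2 * (x * y * z) *
        (x * y * (x - y) ^ 2 + y * z * (y - z) ^ 2 + z * x * (z - x) ^ 2) ≤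
      (x ^ 2 + y ^ 2 + z ^ 2 + x * y + y * z + z * x) ^ 2 *
        (x * (y - z) ^ 2 + y * (z - x) ^ 2 + z * (x - y) ^ 2) := by
  obtain ⟨u, v, hv, hvu, hsum, hpair⟩ := exists_isosceles_sum_eq_sum_mul_eq
    (show 0 ≤ x + y + z by positivity) (show 0 ≤ x * y + y * z + z * x by positivity)
  have hu : 0 ≤ u := hv.trans hvu
  have hprod : x * y * z ≤ u * v ^ 2 := mul_mul_le_isosceles hvu hsum hpair
  have hnorm : x ^ 2 + y ^ 2 + z ^ 2 + x * y + y * z + z * x = u ^ 2 + 2 * u * v + 3 * v ^ 2 := by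
    linear_combination (x + y + z + u + 2 * v) * hsum - hpair
  have hsymm : x * y * (x - y) ^ 2 + y * z * (y - z) ^ 2 + z * x * (z - x) ^ 2 ≤
      2 * u * v * (u - v) ^ 2 := by
    rw [sum_mul_mul_sub_sq_eq_isosceles hsum hpair]
    exact sub_le_self _ (mul_nonneg (by positivity) (sub_nonneg.2 hprod))
  have hcirc : 2 * v * (u - v) ^ 2 ≤ x * (y - z) ^ 2 + y * (z - x) ^ 2 + z * (x - y) ^ 2 := by
    rw [sum_mul_sub_sq_eq_isosceles hsum hpair]
    linarith
  calc _ ≤ 4 * (1 + √3) ^ 2 * (u * v ^ 2) * (2 * u * v * (u - v) ^ 2) := by gcongr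
    _ = (2 * (1 + √3) * (u * v)) ^ 2 * (2 * v * (u - v) ^ 2) := by ring
    _ ≤ (u ^ 2 + 2 * u * v + 3 * v ^ 2) ^ 2 * (2 * v * (u - v) ^ 2) := by
      gcongr
      exact two_mul_one_add_sqrt_three_mul_le u v
    _ ≤ _ := by rw [hnorm]; gcongr

theorem exists_ravi_of_affineIndependent {V P : Type*} [NormedAddCommGroup V] [NormedSpace ℝ V]
    [StrictConvexSpace ℝ V] [MetricSpace P] [NormedAddTorsor V P] {A B C : P}
    (h : AffineIndependent ℝ ![A, B, C]) :
    ∃ x y z : ℝ, 0 < x ∧ 0 < y ∧ 0 < z ∧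
      dist B C = y + z ∧ dist C A = z + x ∧ dist A B = x + y := by
  have hA : dist B C < dist B A + dist A C :=
    dist_lt_dist_add_dist_iff.2 (h.not_wbtw_of_injective 1 0 2 (by decide))
  have hB : dist A C < dist A B + dist B C :=
    dist_lt_dist_add_dist_iff.2 (h.not_wbtw_of_injective 0 1 2 (by decide))
  have hC : dist A B < dist A C + dist C B :=
    dist_lt_dist_add_dist_iff.2 (h.not_wbtw_of_injective 0 2 1 (by decide))
  rw [dist_comm B A, dist_comm A C] at hA
  rw [dist_comm A C] at hB
  rw [dist_comm A C, dist_comm C B] at hC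
  exact ⟨(dist C A + dist A B - dist B C) / 2, (dist A B + dist B C - dist C A) / 2,
    (dist B C + dist C A - dist A B) / 2, by linarith, by linarith, by linarith,
    by ring, by ring, by ring⟩

section Barycentric

variable {A B C : EuclideanSpace ℝ (Fin 2)}

theorem sum_normalized_weights {k : Type*} [DivisionRing k] {x y z s : k} (hs : x + y + z = s)
    (hs₀ : s ≠ 0) : ∑ i, ![x / s, y / s, z / s] i = 1 := by
  simp [Fin.sum_univ_three, ← add_div, hs, hs₀]

theorem bary_eq_affineCombination {x y z s : ℝ} (hs : x + y + z = s) (hs₀ : s ≠ 0) :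
    bary A B C x y z =
      Finset.univ.affineCombination ℝ ![A, B, C] ![x / s, y / s, z / s] := by
  rw [Finset.affineCombination_eq_linear_combination _ _ _ (sum_normalized_weights hs hs₀),
    Fin.sum_univ_three, bary, hs]
  simp [smul_smul, div_eq_inv_mul]

theorem dist_bary_sq {x y z s x' y' z' s' : ℝ} (hs : x + y + z = s) (hs₀ : s ≠ 0)
    (hs' : x' + y' + z' = s') (hs'₀ : s' ≠ 0) :
    dist (bary A B C x y z) (bary A B C x' y' z') ^ 2 =
      -(dist B C ^ 2 * ((y / s - y' / s') * (z / s - z' / s')) +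
        dist C A ^ 2 * ((z / s - z' / s') * (x / s - x' / s')) +
        dist A B ^ 2 * ((x / s - x' / s') * (y / s - y' / s'))) := by
  rw [bary_eq_affineCombination hs hs₀, bary_eq_affineCombination hs' hs'₀, sq,
    EuclideanGeometry.dist_affineCombination _ (sum_normalized_weights hs hs₀)
      (sum_normalized_weights hs' hs'₀)]
  simp only [Fin.sum_univ_three, Pi.sub_apply, Matrix.cons_val, dist_self, dist_comm B A,
    dist_comm C B, dist_comm A C]
  ring

variable {x y z : ℝ}

theorem dist_incenter_circumcenter_sq (hx : 0 < x) (hy : 0 < y) (hz : 0 < z)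
    (ha : dist B C = y + z) (hb : dist C A = z + x) (hc : dist A B = x + y) :
    dist (incenter A B C) (circumcenter A B C) ^ 2 =
      (y + z) * (z + x) * (x + y) / (x + y + z) *
        ((x * (y - z) ^ 2 + y * (z - x) ^ 2 + z * (x - y) ^ 2) / (16 * (x * y * z))) := by
  simp only [incenter, circumcenter, tcenter]
  -- By Heron's formula, the value of `s'` is `-16` times the squared area of the triangle.
  rw [dist_bary_sq (s := 2 * (x + y + z)) (s' := -(16 * (x * y * z) * (x + y + z)))
    (by rw [ha, hb, hc]; ring) (by positivity) (by rw [ha, hb, hc]; ring)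
    (neg_ne_zero.2 (by positivity)), ha, hb, hc]
  field_simp
  ring

theorem dist_incenter_symmedianPoint_sq (hx : 0 < x) (hy : 0 < y) (hz : 0 < z)
    (ha : dist B C = y + z) (hb : dist C A = z + x) (hc : dist A B = x + y) :
    dist (incenter A B C) (symmedianPoint A B C) ^ 2 =
      (y + z) * (z + x) * (x + y) / (x + y + z) *
        ((x * y * (x - y) ^ 2 + y * z * (y - z) ^ 2 + z * x * (z - x) ^ 2) /
          (4 * (x ^ 2 + y ^ 2 + z ^ 2 + x * y + y * z + z * x) ^ 2)) := by
  simp only [incenter, symmedianPoint, tcenter]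
  rw [dist_bary_sq (s := 2 * (x + y + z))
    (s' := 2 * (x ^ 2 + y ^ 2 + z ^ 2 + x * y + y * z + z * x))
    (by rw [ha, hb, hc]; ring) (by positivity) (by rw [ha, hb, hc]; ring) (by positivity),
    ha, hb, hc]
  field_simp
  ring

end Barycentric

theorem stmt_8 (A B C : EuclideanSpace ℝ (Fin 2))
    (h : AffineIndependent ℝ ![A, B, C]) :
    dist (tcenter (fun a b c => a) A B C) (tcenter (fun a b c => a^2*(a^2 - b^2 - c^2)) A B C) ≥ (1 + Real.sqrt 3) * dist (tcenter (fun a b c => a) A B C) (tcenter (fun a b c => a^2) A B C) := by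
  change (1 + √3) * dist (incenter A B C) (symmedianPoint A B C) ≤
    dist (incenter A B C) (circumcenter A B C)
  obtain ⟨x, y, z, hx, hy, hz, ha, hb, hc⟩ := exists_ravi_of_affineIndependent h
  refine le_of_sq_le_sq ?_ dist_nonneg
  rw [mul_pow, dist_incenter_symmedianPoint_sq hx hy hz ha hb hc,
    dist_incenter_circumcenter_sq hx hy hz ha hb hc, mul_left_comm]
  gcongr
  rw [mul_div_assoc', div_le_div_iff₀ (by positivity) (by positivity)]
  linear_combination 4 * ravi_inequality hx.le hy.le hz.le
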